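/- Let F : ℝ³ → ℝ³ be a trilinear map, i.e., each component of F is a real polynomial of degree at most 1 in each of the variables x, y, z separately. Then the Jacobian determinant J(x,y,z) = det DF(x,y,z) is a polynomial of total degree at most 4, and its pure third partial derivatives vanish identically: ∂³J/∂x³ = ∂³J/∂y³ = ∂³J/∂z³ = 0. -/

import Mathlib

/-!
Both claims are degree counts in the expansion of the determinant, where each term takes one
factor from every column (`totalDegree_det_le`, `degreeOf_det_le`).

* Pure third derivatives: column `i` of the Jacobian does not involve `x_i`, and each of the other
  two columns has degree at most `1` in `x_i`. Hence the determinant has degree at most `2` in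
  `x_i`, and three derivatives in `x_i` annihilate it.
* Total degree: write `f_k = p_k + d_k xyz` with `d_k` constant. The remaining monomials of a
  trilinear polynomial have degree at most `2`, so the Jacobian is `P + d mᵀ` with `P` of degree at
  most `1` and `m = (yz, xz, xy)`. Multilinearity in the columns kills every term containing two
  multiples of `d`, leaving `det P` (degree at most `3`) and terms with exactly one
  column replaced by `m_j d` (degree at most `1 + 1 + 2 = 4`).
-/

open MvPolynomial Matrix

/-- The Jacobian matrix (of polynomials) of a polynomial map `f : ℝ³ → ℝ³`,
with `(i,j)` entry `∂ f_i / ∂ x_j`. -/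
noncomputable def polyJacobian (f : Fin 3 → MvPolynomial (Fin 3) ℝ) :
    Matrix (Fin 3) (Fin 3) (MvPolynomial (Fin 3) ℝ) :=
  Matrix.of fun i j => pderiv j (f i)

theorem totalDegree_det_le (A : Matrix (Fin 3) (Fin 3) (MvPolynomial (Fin 3) ℝ)) (e : Fin 3 → ℕ)
    (h : ∀ i j, (A i j).totalDegree ≤ e j) : A.det.totalDegree ≤ ∑ j, e j := by
  rw [det_apply]
  refine totalDegree_finsetSum_le fun σ _ => ?_
  rw [Units.smul_def, ← Int.cast_smul_eq_zsmul ℝ]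
  refine (totalDegree_smul_le _ _).trans ((totalDegree_finsetProd _ _).trans ?_)
  exact Finset.sum_le_sum fun j _ => h _ _

theorem degreeOf_det_le (A : Matrix (Fin 3) (Fin 3) (MvPolynomial (Fin 3) ℝ)) (k : Fin 3)
    (e : Fin 3 → ℕ) (h : ∀ i j, (A i j).degreeOf k ≤ e j) : A.det.degreeOf k ≤ ∑ j, e j := by
  rw [det_apply]
  refine (degreeOf_sum_le _ _ _).trans (Finset.sup_le fun σ _ => ?_)
  rw [Units.smul_def, ← Int.cast_smul_eq_zsmul ℝ, smul_eq_C_mul]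
  refine (degreeOf_C_mul_le _ _ _).trans ((degreeOf_prod_le _ _ _).trans ?_)
  exact Finset.sum_le_sum fun j _ => h _ _

theorem add_single_mem_support_of_mem_support_pderiv {p : MvPolynomial (Fin 3) ℝ} {j : Fin 3}
    {m : Fin 3 →₀ ℕ} (hm : m ∈ (pderiv j p).support) :
    m + Finsupp.single j 1 ∈ p.support := by
  rw [mem_support_iff, coeff_pderiv] at hm
  exact mem_support_iff.2 (left_ne_zero_of_mul hm)

theorem totalDegree_pderiv_le (p : MvPolynomial (Fin 3) ℝ) (j : Fin 3) :
    (pderiv j p).totalDegree ≤ p.totalDegree - 1 := by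
  refine Finset.sup_le fun m hm => ?_
  have h := le_totalDegree (add_single_mem_support_of_mem_support_pderiv hm)
  rw [Finsupp.sum_add_index' (by simp) (by simp), Finsupp.sum_single_index rfl] at h
  omega

theorem degreeOf_pderiv_le (p : MvPolynomial (Fin 3) ℝ) (i j : Fin 3) :
    (pderiv j p).degreeOf i ≤ p.degreeOf i - if j = i then 1 else 0 := by
  rw [degreeOf_le_iff]
  intro m hm
  have h := monomial_le_degreeOf i (add_single_mem_support_of_mem_support_pderiv hm)
  rw [Finsupp.add_apply, Finsupp.single_apply] at h
  omega

theorem pderiv_eq_zero_of_degreeOf_eq_zero {p : MvPolynomial (Fin 3) ℝ} {i : Fin 3}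
    (h : p.degreeOf i = 0) : pderiv i p = 0 := by
  by_contra h0
  obtain ⟨m, hm⟩ := support_nonempty.2 h0
  have := monomial_le_degreeOf i (add_single_mem_support_of_mem_support_pderiv hm)
  simp [h] at this

/-- Removing the `xyz` term from a trilinear polynomial leaves total degree at most `2`. -/
theorem exists_eq_add_C_mul_xyz (f : MvPolynomial (Fin 3) ℝ) (hf : ∀ j, f.degreeOf j ≤ 1) :
    ∃ (p : MvPolynomial (Fin 3) ℝ) (c : ℝ),
      p.totalDegree ≤ 2 ∧ f = p + C c * (X 0 * X 1 * X 2) := by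
  classical
  set s : Fin 3 →₀ ℕ := Finsupp.single 0 1 + Finsupp.single 1 1 + Finsupp.single 2 1 with hs
  have hX : (X 0 * X 1 * X 2 : MvPolynomial (Fin 3) ℝ) = monomial s 1 := by
    simp [X, monomial_mul, hs]
  refine ⟨f - C (coeff s f) * (X 0 * X 1 * X 2), coeff s f, ?_, by ring⟩
  rw [hX, C_mul_monomial, mul_one]
  refine Finset.sup_le fun m hm => ?_
  rw [mem_support_iff, coeff_sub, coeff_monomial] at hm
  by_cases hms : s = m
  · subst hms
    simp at hm
  · rw [if_neg hms, sub_zero] at hm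
    have hle := fun j => (monomial_le_degreeOf j (mem_support_iff.2 hm)).trans (hf j)
    rw [Finsupp.sum_fintype _ _ (by simp), Fin.sum_univ_three]
    by_contra hlt
    have h0 := hle 0
    have h1 := hle 1
    have h2 := hle 2
    refine hms (Finsupp.ext fun j => ?_)
    fin_cases j <;> simp [hs] <;> omega

/-- The determinant of a rank-one perturbation: by multilinearity, only the terms with at most
one column taken from `d mᵀ` survive. -/
theorem det_add_rank_one {R : Type*} [CommRing R] (P : Matrix (Fin 3) (Fin 3) R)
    (d m : Fin 3 → R) :
    (P + Matrix.of fun i j => d i * m j).det =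
      P.det + ∑ j, (P.updateCol j fun i => d i * m j).det := by
  simp [det_fin_three, Fin.sum_univ_three, updateCol_apply]
  ring

/-- for a trilinear map `F : ℝ³ → ℝ³` (each component of degree at most 1
in each variable separately), the Jacobian determinant `J = det DF` has total degree at
most 4 and its pure third partial derivatives vanish: `∂³J/∂x_i³ = 0` for each `i`. -/
theorem trilinear_jacobian_structure (f : Fin 3 → MvPolynomial (Fin 3) ℝ)
    (hf : ∀ i j : Fin 3, (f i).degreeOf j ≤ 1) :
    ((polyJacobian f).det.totalDegree ≤ 4) ∧
    (∀ i : Fin 3, pderiv i (pderiv i (pderiv i (polyJacobian f).det)) = 0) := by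
  constructor
  · choose p c hp hfp using fun i => exists_eq_add_C_mul_xyz (f i) (hf i)
    set m : Fin 3 → MvPolynomial (Fin 3) ℝ := fun j => pderiv j (X 0 * X 1 * X 2)
    have hm : ∀ j, (m j).totalDegree ≤ 2 := fun j => by
      have h1 := totalDegree_pderiv_le (X 0 * X 1 * X 2) j
      have h2 := totalDegree_mul (X 0 * X 1 : MvPolynomial (Fin 3) ℝ) (X 2)
      have h3 := totalDegree_mul (X 0 : MvPolynomial (Fin 3) ℝ) (X 1)
      simp only [totalDegree_X] at h2 h3
      exact h1.trans (by omega)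
    have hP : ∀ i j, (polyJacobian p i j).totalDegree ≤ 1 := fun i j =>
      (totalDegree_pderiv_le (p i) j).trans (by have := hp i; omega)
    have hJ : polyJacobian f = polyJacobian p + Matrix.of fun i j => C (c i) * m j := by
      ext1 i j
      simp only [polyJacobian, of_apply, Matrix.add_apply, m]
      rw [hfp i, map_add, pderiv_C_mul]
    rw [hJ, det_add_rank_one _ (fun i => C (c i)) m]
    refine (totalDegree_add _ _).trans (max_le ?_ (totalDegree_finsetSum_le fun j _ => ?_))
    · exact (totalDegree_det_le _ (fun _ => 1) hP).trans (by simp)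
    · refine (totalDegree_det_le _ (fun k => if k = j then 2 else 1) fun i k => ?_).trans ?_
      · rw [updateCol_apply]
        split_ifs with hk
        · refine (totalDegree_mul _ _).trans ?_
          rw [totalDegree_C, zero_add]
          exact hm j
        · exact hP i k
      · fin_cases j <;> simp [Fin.sum_univ_three]
  · intro i
    have hdet : (polyJacobian f).det.degreeOf i ≤ 2 := by
      refine (degreeOf_det_le _ i (fun j => 1 - if j = i then 1 else 0) fun k j => ?_).trans ?_
      · exact (degreeOf_pderiv_le (f k) i j).trans (Nat.sub_le_sub_right (hf k i) _)
      · fin_cases i <;> simp [Fin.sum_univ_three]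
    apply pderiv_eq_zero_of_degreeOf_eq_zero
    have h1 := degreeOf_pderiv_le (polyJacobian f).det i i
    have h2 := degreeOf_pderiv_le (pderiv i (polyJacobian f).det) i i
    simp only [if_true] at h1 h2
    omega
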